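/- arXiv:2107.09310 — 9 statements merged into one kernel-verified Lean document; each statement's English description precedes it below -/
import Mathlib

section
/- Let n ≥ 1, let p, q : {1,…,n} → ℝ≥0, and let M ⊆ {1,…,n} with m = |M|. Let a₁ ≤ … ≤ a_{n−m} be the values (p_j)_{j ∈ {1,…,n}\M} sorted in non-decreasing order, let b₁ ≤ … ≤ b_{n−m} be the values (q_j)_{j ∈ {1,…,n}\M} sorted in non-decreasing order, and set d_k = a_k + b_k for k = 1,…,n−m. Let e₁ ≤ … ≤ e_n be the non-decreasing sorting of the multiset formed by the values {p_j + q_j : j ∈ M} together with {d_1,…,d_{n−m}}. Then f(M) = ∑_{i=1}^n (n+1−i)·e_i. -/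
open Finset

/-- Cost of a schedule `σ` (position `i`, 0-indexed, has weight `n - i`,
i.e. position `i+1` in 1-indexed notation has weight `n + 1 - (i+1)`). -/
noncomputable def cost (n : ℕ) (w : Fin n → ℝ) (σ : Equiv.Perm (Fin n)) : ℝ :=
  ∑ i : Fin n, ((n : ℝ) - ((i : ℕ) : ℝ)) * w (σ i)

/-- `f(M)`: minimal combined cost over pairs of schedules agreeing on the
positions of all jobs in `M`. -/
noncomputable def fval (n : ℕ) (p q : Fin n → ℝ) (M : Finset (Fin n)) : ℝ :=
  sInf {v : ℝ | ∃ σ τ : Equiv.Perm (Fin n),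
    (∀ j ∈ M, σ.symm j = τ.symm j) ∧ v = cost n p σ + cost n q τ}

/-- `OPT(Δ)`: optimal value of the recoverable robust single machine
scheduling problem. -/
noncomputable def OPT (n : ℕ) (p q : Fin n → ℝ) (Δ : ℕ) : ℝ :=
  sInf {v : ℝ | ∃ σ τ : Equiv.Perm (Fin n),
    Δ ≤ (Finset.univ.filter (fun j => σ.symm j = τ.symm j)).card ∧
    v = cost n p σ + cost n q τ}

/-- Value of (UB-SMSP): both stages forced identical. -/
noncomputable def UBval (n : ℕ) (p q : Fin n → ℝ) : ℝ :=
  sInf {v : ℝ | ∃ σ : Equiv.Perm (Fin n), v = cost n (fun j => p j + q j) σ}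

/-- Value of (LB-SMSP): the two stages optimised independently. -/
noncomputable def LBval (n : ℕ) (p q : Fin n → ℝ) : ℝ :=
  sInf {v : ℝ | ∃ σ : Equiv.Perm (Fin n), v = cost n p σ} +
  sInf {v : ℝ | ∃ τ : Equiv.Perm (Fin n), v = cost n q τ}

/-!
Fix an enumeration `u` of the jobs outside `M` by increasing `p` and an enumeration `v` by
increasing `q`, and let `π` be the permutation of the jobs that fixes `M` and sends `u r` to `v r`.
In an admissible pair `(σ, τ)` the jobs outside `M` fill the same set of positions in both
schedules, and by the rearrangement inequality it is optimal to put them there in the orders `u`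
and `v`. The second schedule then is `π` composed with the first one, so the problem becomes a
single-stage one with processing times `p + q ∘ π`, which is solved by sorting.
-/

section Sorting

variable {α R : Type*} {k : ℕ}

lemma exists_equiv_monotone [Fintype α] [LinearOrder R] (hk : Fintype.card α = k) (f : α → R) :
    ∃ u : Fin k ≃ α, Monotone fun r => f (u r) :=
  let g := (Fintype.equivFinOfCardEq hk).symm
  ⟨(Tuple.sort (f ∘ g)).trans g, Tuple.monotone_sort (f ∘ g)⟩

lemma map_univ_val_eq_coe_ofFn [Fintype α] (u : Fin k ≃ α) (f : α → R) :
    (univ : Finset α).val.map f = (List.ofFn fun r => f (u r) : Multiset R) := by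
  rw [← Finset.map_univ_equiv u, Finset.map_val, Multiset.map_map, ← Fin.univ_val_map]
  rfl

lemma map_val_eq_map_univ_subtype (s : Finset α) (f : α → R) :
    s.val.map f = (univ : Finset s).val.map (fun j : s => f j) := by
  rw [Finset.univ_eq_attach, Finset.attach_val]
  exact (Multiset.attach_map_val' s.val f).symm

lemma sort_map_univ_val_eq_ofFn [Fintype α] [LinearOrder R] {u : Fin k ≃ α} {f : α → R}
    (hu : Monotone fun r => f (u r)) :
    ((univ : Finset α).val.map f).sort (· ≤ ·) = List.ofFn fun r => f (u r) := by
  refine List.Perm.eq_of_sortedLE (Multiset.pairwise_sort _ _).sortedLE hu.sortedLE_ofFn ?_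
  rw [← Multiset.coe_eq_coe, Multiset.sort_eq, map_univ_val_eq_coe_ofFn u]

end Sorting

section Matching

variable {α R : Type*} [DecidableEq α] {k : ℕ} {s : Finset α}

/-- The permutation matching two enumerations `u` and `v` of the same set `s`: it sends `u r` to
`v r` and fixes every element outside `s`. -/
def matchingPerm (u v : Fin k ≃ s) : Equiv.Perm α :=
  Equiv.Perm.ofSubtype (u.symm.trans v)

lemma matchingPerm_apply_enum (u v : Fin k ≃ s) (r : Fin k) : matchingPerm u v (u r) = v r := by
  rw [matchingPerm, Equiv.Perm.ofSubtype_apply_coe, Equiv.trans_apply, Equiv.symm_apply_apply]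

lemma matchingPerm_apply_of_notMem (u v : Fin k ≃ s) {j : α} (hj : j ∉ s) :
    matchingPerm u v j = j :=
  Equiv.Perm.ofSubtype_apply_of_not_mem _ hj

lemma map_add_zipWith_sort_eq_map_matchingPerm [Fintype α] [LinearOrder R] [Add R]
    {M : Finset α} {p q : α → R} {u v : Fin k ≃ (Mᶜ : Finset α)}
    (hu : Monotone fun r => p (u r)) (hv : Monotone fun r => q (v r)) :
    M.val.map (fun j => p j + q j) +
        (List.zipWith (· + ·) ((Mᶜ.val.map p).sort (· ≤ ·)) ((Mᶜ.val.map q).sort (· ≤ ·)) :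
          Multiset R) =
      (univ : Finset α).val.map fun j => p j + q (matchingPerm u v j) := by
  set w : α → R := fun j => p j + q (matchingPerm u v j) with hw
  have map_mem : M.val.map (fun j => p j + q j) = M.val.map w :=
    Multiset.map_congr rfl fun j hj => by
      simp only [hw, matchingPerm_apply_of_notMem u v (notMem_compl.mpr hj)]
  have map_compl : (List.zipWith (· + ·) ((Mᶜ.val.map p).sort (· ≤ ·))
      ((Mᶜ.val.map q).sort (· ≤ ·)) : Multiset R) = Mᶜ.val.map w := by
    simp only [map_val_eq_map_univ_subtype Mᶜ]
    rw [sort_map_univ_val_eq_ofFn hu, sort_map_univ_val_eq_ofFn hv, map_univ_val_eq_coe_ofFn u]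
    congr 1
    apply List.ext_getElem <;> simp [hw, matchingPerm_apply_enum]
  rw [map_mem, map_compl, ← Multiset.map_add, ← Finset.disjUnion_val M Mᶜ disjoint_compl_right,
    Finset.disjUnion_eq_union, Finset.union_compl]

end Matching

section Rearrangement

variable {ι α R : Type*}

lemma exists_equiv_reorder [Finite ι] [LinearOrder ι] (σ : ι ≃ α) {s : Finset α} {k : ℕ}
    (u : Fin k ≃ s) :
    ∃ (ρ : ι ≃ α) (rank : {i // σ i ∈ s} ≃o Fin k),
      (∀ i, σ i ∉ s → ρ i = σ i) ∧ ∀ i : {i // σ i ∈ s}, ρ i = u (rank i) := by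
  classical
  have := Fintype.ofFinite ι
  let σs : {i // σ i ∈ s} ≃ s := σ.subtypeEquiv fun _ => Iff.rfl
  let rank : {i // σ i ∈ s} ≃o Fin k :=
    (monoEquivOfFin _ (by simpa using Fintype.card_congr (σs.trans u.symm))).symm
  refine ⟨σ.trans (Equiv.Perm.ofSubtype (σs.symm.trans (rank.toEquiv.trans u))), rank,
    fun i hi => Equiv.Perm.ofSubtype_apply_of_not_mem _ hi, fun i => ?_⟩
  have apply_coe : σ i = (σs i : α) := rfl
  rw [Equiv.trans_apply, apply_coe, Equiv.Perm.ofSubtype_apply_coe]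
  simp

variable [Fintype ι] [Semiring R] [LinearOrder R] [IsStrictOrderedRing R] [ExistsAddOfLE R]
  {c : ι → R}

lemma sum_mul_le_sum_mul_of_antivaryOn {s : Finset ι} {w : α → R} {ρ σ : ι ≃ α}
    (hρ : AntivaryOn c (fun i => w (ρ i)) s) (hσ : ∀ i ∉ s, σ i = ρ i) :
    ∑ i, c i * w (ρ i) ≤ ∑ i, c i * w (σ i) := by
  classical
  have support_subset : {i | σ.trans ρ.symm i ≠ i} ⊆ (s : Set ι) := fun i hi => by
    by_contra his
    exact hi (by simp [hσ i his])
  have sum_le : ∑ i ∈ s, c i * w (ρ i) ≤ ∑ i ∈ s, c i * w (σ i) := by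
    simpa using hρ.sum_mul_le_sum_mul_comp_perm support_subset
  rw [← Finset.sum_add_sum_compl s, ← Finset.sum_add_sum_compl s (fun i => c i * w (σ i))]
  refine add_le_add sum_le (Finset.sum_congr rfl fun i hi => ?_).le
  rw [hσ i (mem_compl.mp hi)]

variable [LinearOrder ι] {s : Finset α} {k : ℕ}

lemma exists_sum_mul_add_le_of_monotone (hc : Antitone c) {u : Fin k ≃ s} {x y : α → R}
    (hx : Monotone fun r => x (u r)) (hy : Monotone fun r => y (u r))
    {σ τ : ι ≃ α} (hστ : ∀ i, σ i ∉ s → τ i = σ i) :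
    ∃ ρ : ι ≃ α, ∑ i, c i * (x (ρ i) + y (ρ i)) ≤ ∑ i, c i * x (σ i) + ∑ i, c i * y (τ i) := by
  obtain ⟨ρ, rank, hρσ, hρ⟩ := exists_equiv_reorder σ u
  let P : Finset ι := s.map σ.symm.toEmbedding
  have mem_P (i : ι) : i ∈ P ↔ σ i ∈ s := by simp [P]
  have antivaryOn_P {w : α → R} (hw : Monotone fun r => w (u r)) :
      AntivaryOn c (fun i => w (ρ i)) P := by
    refine (hc.antitoneOn _).antivaryOn fun i hi j hj hij => ?_
    let i' : {i // σ i ∈ s} := ⟨i, (mem_P i).mp hi⟩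
    let j' : {i // σ i ∈ s} := ⟨j, (mem_P j).mp hj⟩
    have enum_le : w (u (rank i')) ≤ w (u (rank j')) := hw (rank.monotone hij)
    rwa [← hρ i', ← hρ j'] at enum_le
  have eq_off_P (i : ι) (hi : i ∉ P) : σ i = ρ i := (hρσ i (mt (mem_P i).mpr hi)).symm
  refine ⟨ρ, ?_⟩
  simp only [mul_add, Finset.sum_add_distrib]
  exact add_le_add (sum_mul_le_sum_mul_of_antivaryOn (antivaryOn_P hx) eq_off_P)
    (sum_mul_le_sum_mul_of_antivaryOn (antivaryOn_P hy) fun i hi =>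
      (hστ i (mt (mem_P i).mpr hi)).trans (eq_off_P i hi))

lemma isLeast_sum_mul_matchingPerm [DecidableEq α] (hc : Antitone c) {p q : α → R}
    {u v : Fin k ≃ s} (hu : Monotone fun r => p (u r)) (hv : Monotone fun r => q (v r))
    {σ₀ : ι ≃ α} (hσ₀ : Monotone fun i => p (σ₀ i) + q (matchingPerm u v (σ₀ i))) :
    IsLeast {z : R | ∃ σ τ : ι ≃ α, (∀ j ∉ s, σ.symm j = τ.symm j) ∧
        z = ∑ i, c i * p (σ i) + ∑ i, c i * q (τ i)}
      (∑ i, c i * (p (σ₀ i) + q (matchingPerm u v (σ₀ i)))) := by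
  let π := matchingPerm u v
  have π_fix (j : α) (hj : j ∉ s) : π j = j := matchingPerm_apply_of_notMem u v hj
  refine ⟨⟨σ₀, σ₀.trans π, fun j hj => ?_, ?_⟩, ?_⟩
  · rw [Equiv.eq_symm_apply, Equiv.trans_apply, Equiv.apply_symm_apply, π_fix j hj]
  · simp only [π, Equiv.trans_apply, mul_add, Finset.sum_add_distrib]
  · rintro _ ⟨σ, τ, hστ, rfl⟩
    have monotone_q_π : Monotone fun r => (q ∘ π) (u r) := by
      simpa only [π, Function.comp_apply, matchingPerm_apply_enum] using hv
    have agree (i : ι) (hi : σ i ∉ s) : τ.trans π.symm i = σ i := by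
      rw [Equiv.trans_apply, Equiv.symm_apply_eq, π_fix _ hi, ← Equiv.eq_symm_apply, ← hστ _ hi,
        Equiv.symm_apply_apply]
    obtain ⟨ρ, hρ⟩ := exists_sum_mul_add_le_of_monotone hc hu monotone_q_π agree
    calc ∑ i, c i * (p (σ₀ i) + q (π (σ₀ i)))
      _ ≤ ∑ i, c i * (p (ρ i) + q (π (ρ i))) :=
        sum_mul_le_sum_mul_of_antivaryOn (s := univ) (w := fun j => p j + q (π j))
          ((hc.antivary hσ₀).antivaryOn _) (by simp)
      _ ≤ ∑ i, c i * p (σ i) + ∑ i, c i * q (τ i) := by simpa using hρ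

end Rearrangement

theorem stmt_0_general {α R : Type*} [Fintype α] [DecidableEq α] [Semiring R] [LinearOrder R]
    [IsStrictOrderedRing R] [ExistsAddOfLE R] {n : ℕ} (hn : Fintype.card α = n) {c : Fin n → R}
    (hc : Antitone c) (p q : α → R) (M : Finset α) :
    IsLeast {v : R | ∃ σ τ : Fin n ≃ α, (∀ j ∈ M, σ.symm j = τ.symm j) ∧
        v = ∑ i, c i * p (σ i) + ∑ i, c i * q (τ i)}
      (∑ i, c i * ((M.val.map (fun j => p j + q j) +
        (List.zipWith (· + ·) ((Mᶜ.val.map p).sort (· ≤ ·)) ((Mᶜ.val.map q).sort (· ≤ ·)) :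
          Multiset R)).sort (· ≤ ·)).getD i 0) := by
  obtain ⟨u, hu⟩ := exists_equiv_monotone rfl fun j : (Mᶜ : Finset α) => p j
  obtain ⟨v, hv⟩ := exists_equiv_monotone rfl fun j : (Mᶜ : Finset α) => q j
  obtain ⟨σ₀, hσ₀⟩ := exists_equiv_monotone hn fun j => p j + q (matchingPerm u v j)
  rw [map_add_zipWith_sort_eq_map_matchingPerm hu hv, sort_map_univ_val_eq_ofFn hσ₀]
  simpa using isLeast_sum_mul_matchingPerm hc hu hv hσ₀

/-- Theorem 1 / Algorithm 1: the value `f(M)` is computed by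
the sorting procedure: sort the `p`- and `q`-values of the jobs outside `M`
separately in non-decreasing order and add them componentwise to get `d`;
merge these with the joint processing times `p j + q j` of the jobs in `M`
and sort non-decreasingly to obtain `e`; then `f(M) = ∑ i (n+1-i)·e_i`. -/
theorem stmt_0 (n : ℕ) (hn : 1 ≤ n) (p q : Fin n → ℝ)
    (hp : ∀ j, 0 ≤ p j) (hq : ∀ j, 0 ≤ q j) (M : Finset (Fin n))
    (a b d : List ℝ) (e : List ℝ)
    (ha : a = (Mᶜ.val.map p).sort (· ≤ ·))
    (hb : b = (Mᶜ.val.map q).sort (· ≤ ·))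
    (hd : d = List.zipWith (· + ·) a b)
    (he : e = ((M.val.map (fun j => p j + q j)) + (↑d : Multiset ℝ)).sort (· ≤ ·)) :
    fval n p q M = ∑ i ∈ Finset.range n, ((n : ℝ) - (i : ℝ)) * e.getD i 0 := by
  have hc : Antitone fun i : Fin n => (n : ℝ) - ((i : ℕ) : ℝ) := fun i j hij =>
    sub_le_sub_left (by exact_mod_cast hij) _
  subst ha hb hd he
  rw [Finset.sum_range]
  exact (stmt_0_general (Fintype.card_fin n) hc p q M).csInf_eq
end

section
/- Let n ≥ 1 and let p, q : {1,…,n} → ℝ≥0. Then UB ≤ 2·LB, where UB = min_σ C_{p+q}(σ) is the optimal value when the first-stage and second-stage schedules are forced to coincide, and LB = (min_σ C_p(σ)) + (min_τ C_q(τ)) is the optimal value when the two schedules are chosen independently. -/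
open Finset

/-!
The cost of a schedule is a weighted sum of the processing times in which the last job has weight
`1`, the one before it weight `2`, and so on; so at most `m` jobs have weight at most `m`. Given `k`
schedules, let `f j` be the least weight job `j` has in any of them. At most `k * m` jobs satisfy
`f j ≤ m`, so when the jobs are scheduled by decreasing `f`, job `j` gets weight at most `k * f j`.
This common schedule therefore costs at most `k` times as much as the `k` schedules together.
-/

lemma sInf_setOf_exists_eq {ι α : Type*} [InfSet α] (f : ι → α) :
    sInf {v | ∃ i, v = f i} = ⨅ i, f i :=
  congrArg sInf (Set.ext fun _ => exists_congr fun _ => eq_comm)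

lemma exists_perm_val_lt_card_filter_le {n : ℕ} {α : Type*} [LinearOrder α] (f : Fin n → α) :
    ∃ π : Equiv.Perm (Fin n), ∀ j, (π j : ℕ) < #{i | f i ≤ f j} := by
  refine ⟨(Tuple.sort f).symm, fun j => ?_⟩
  set k := (Tuple.sort f).symm j with hk
  have apply_sort_le {l : Fin n} (hl : l ≤ k) : f (Tuple.sort f l) ≤ f j := by
    simpa [hk] using Tuple.monotone_sort f hl
  calc (k : ℕ) < #(Iic k) := by simp
    _ ≤ #{i | f i ≤ f j} :=
      card_le_card_of_injOn (Tuple.sort f)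
        (fun l hl => by simpa using apply_sort_le (by simpa using hl))
        (Tuple.sort f).injective.injOn

/-- The coefficient of the processing time of job `j` in the cost of the schedule `σ`: the number of
jobs scheduled no earlier than `j`. Going through `Fin.rev` avoids truncated subtraction. -/
def jobWeight {n : ℕ} (σ : Equiv.Perm (Fin n)) (j : Fin n) : ℕ :=
  (σ.symm j).rev + 1

section JobWeight

variable {n : ℕ} {ι : Type*} [Fintype ι]

lemma cost_eq_sum_jobWeight_mul (w : Fin n → ℝ) (σ : Equiv.Perm (Fin n)) :
    cost n w σ = ∑ j, (jobWeight σ j : ℝ) * w j := by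
  rw [cost, ← Equiv.sum_comp σ (fun j => (jobWeight σ j : ℝ) * w j)]
  refine sum_congr rfl fun i _ => ?_
  have rev_add_one_add : (i.rev : ℕ) + 1 + i = n := by rw [Fin.val_rev]; omega
  have sub_eq : (n : ℝ) - (i : ℕ) = (i.rev : ℕ) + 1 := by
    rw [sub_eq_iff_eq_add]
    exact_mod_cast rev_add_one_add.symm
  rw [jobWeight, Equiv.symm_apply_apply, Nat.cast_add_one, sub_eq]

lemma card_filter_jobWeight_le (σ : Equiv.Perm (Fin n)) (m : ℕ) :
    #{j | jobWeight σ j ≤ m} ≤ m := by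
  have injective_rev : Function.Injective fun j => ((σ.symm j).rev : ℕ) :=
    Fin.val_injective.comp (Fin.rev_injective.comp σ.symm.injective)
  calc #{j | jobWeight σ j ≤ m} ≤ #(range m) :=
        card_le_card_of_injOn (fun j => ((σ.symm j).rev : ℕ))
          (fun j hj => by simpa [jobWeight, -Fin.val_rev, Nat.add_one_le_iff] using hj)
          injective_rev.injOn
    _ = m := card_range m

lemma card_filter_iInf_jobWeight_le [Nonempty ι] (σ : ι → Equiv.Perm (Fin n)) (m : ℕ) :
    #{j | (⨅ t, jobWeight (σ t) j) ≤ m} ≤ Fintype.card ι * m := by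
  have subset_biUnion :
      ({j | (⨅ t, jobWeight (σ t) j) ≤ m} : Finset (Fin n)) ⊆
        univ.biUnion fun t => {j | jobWeight (σ t) j ≤ m} := by
    intro j hj
    obtain ⟨t, ht⟩ := exists_eq_ciInf_of_finite (f := fun t => jobWeight (σ t) j)
    simp only [mem_biUnion, mem_filter_univ, mem_univ, true_and] at hj ⊢
    exact ⟨t, ht.trans_le hj⟩
  exact (card_le_card subset_biUnion).trans
    (card_biUnion_le_card_mul _ _ _ fun t _ => card_filter_jobWeight_le (σ t) m)

lemma exists_jobWeight_le_card_filter_le {α : Type*} [LinearOrder α] (f : Fin n → α) :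
    ∃ ρ : Equiv.Perm (Fin n), ∀ j, jobWeight ρ j ≤ #{i | f i ≤ f j} := by
  obtain ⟨π, hπ⟩ := exists_perm_val_lt_card_filter_le f
  refine ⟨Fin.revPerm.trans π.symm, fun j => ?_⟩
  simpa [jobWeight] using hπ j

lemma exists_jobWeight_le_card_mul (σ : ι → Equiv.Perm (Fin n)) :
    ∃ ρ : Equiv.Perm (Fin n), ∀ t j, jobWeight ρ j ≤ Fintype.card ι * jobWeight (σ t) j := by
  obtain ⟨ρ, hρ⟩ := exists_jobWeight_le_card_filter_le fun j => ⨅ t, jobWeight (σ t) j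
  refine ⟨ρ, fun t j => ?_⟩
  have : Nonempty ι := ⟨t⟩
  calc jobWeight ρ j ≤ #{i | (⨅ s, jobWeight (σ s) i) ≤ ⨅ s, jobWeight (σ s) j} := hρ j
    _ ≤ Fintype.card ι * ⨅ s, jobWeight (σ s) j := card_filter_iInf_jobWeight_le σ _
    _ ≤ Fintype.card ι * jobWeight (σ t) j :=
      Nat.mul_le_mul_left _ (ciInf_le (OrderBot.bddBelow _) t)

lemma exists_cost_sum_le_card_mul_sum_cost (w : ι → Fin n → ℝ) (hw : ∀ t j, 0 ≤ w t j)
    (σ : ι → Equiv.Perm (Fin n)) :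
    ∃ ρ, cost n (fun j => ∑ t, w t j) ρ ≤ Fintype.card ι * ∑ t, cost n (w t) (σ t) := by
  obtain ⟨ρ, hρ⟩ := exists_jobWeight_le_card_mul σ
  refine ⟨ρ, ?_⟩
  calc cost n (fun j => ∑ t, w t j) ρ = ∑ t, ∑ j, (jobWeight ρ j : ℝ) * w t j := by
        simp only [cost_eq_sum_jobWeight_mul, mul_sum]
        exact sum_comm
    _ ≤ ∑ t, ∑ j, (Fintype.card ι * jobWeight (σ t) j : ℝ) * w t j := by
        gcongr with t _ j _
        · exact hw t j
        · exact_mod_cast hρ t j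
    _ = Fintype.card ι * ∑ t, cost n (w t) (σ t) := by
        simp only [cost_eq_sum_jobWeight_mul, mul_sum, mul_assoc]

end JobWeight

/-- the identical-schedules optimum `UB` is at most twice the
independent-schedules optimum `LB`. -/
theorem stmt_2 (n : ℕ) (hn : 1 ≤ n) (p q : Fin n → ℝ)
    (hp : ∀ j, 0 ≤ p j) (hq : ∀ j, 0 ≤ q j) :
    UBval n p q ≤ 2 * LBval n p q := by
  simp only [UBval, LBval, sInf_setOf_exists_eq]
  obtain ⟨σ, hσ⟩ := exists_eq_ciInf_of_finite (f := cost n p)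
  obtain ⟨τ, hτ⟩ := exists_eq_ciInf_of_finite (f := cost n q)
  obtain ⟨ρ, hρ⟩ :=
    exists_cost_sum_le_card_mul_sum_cost ![p, q] (Fin.forall_fin_two.2 ⟨hp, hq⟩) ![σ, τ]
  rw [← hσ, ← hτ]
  calc ⨅ π, cost n (fun j => p j + q j) π
    _ ≤ cost n (fun j => p j + q j) ρ := ciInf_le (Set.finite_range _).bddBelow ρ
    _ ≤ 2 * (cost n p σ + cost n q τ) := by simpa [Fin.sum_univ_two] using hρ
end

section
/- Let n ≥ 1, let p, q : {1,…,n} → ℝ≥0, and let 0 ≤ Δ ≤ n. Then OPT(Δ) ≤ f({1,…,n}) ≤ 2·OPT(Δ); that is, the solution of the problem in which the first-stage and second-stage schedules are forced to be identical (UB-SMSP) is a 2-approximation to RecSMSP. -/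
open Finset

/-! Merge the two schedules by sequencing the jobs by the later of their two positions. If `k` is
the later (0-indexed) position of a job, then at most `2 (n - k)` jobs sit at position `k` or beyond
in one of the two schedules, and every job from this one onwards in the merged schedule is among
them. So merging at most doubles the weight of a job in either stage, and using the merged schedule
in both stages costs at most twice as much as the original pair. -/

section Merging

variable {n : ℕ}

/-- The schedule sequencing the jobs by the later of their positions in `σ` and `τ`. It serves as
the common schedule of both stages in the 2-approximation. Ties are broken by job index. -/
def mergeSchedule (σ τ : Equiv.Perm (Fin n)) : Equiv.Perm (Fin n) :=
  Tuple.sort fun j => max (σ.symm j) (τ.symm j)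

theorem sub_sort_symm_le_card_filter_le {α : Type*} [LinearOrder α] (f : Fin n → α) (j : Fin n) :
    n - (Tuple.sort f).symm j ≤ #{k | f j ≤ f k} := by
  have later_subset : (Ici ((Tuple.sort f).symm j)).map (Tuple.sort f).toEmbedding ⊆
      ({k | f j ≤ f k} : Finset (Fin n)) := by
    intro k hk
    simpa using Tuple.monotone_sort f (mem_Ici.1 (mem_map_equiv.1 hk))
  simpa only [card_map, Fin.card_Ici] using card_le_card later_subset

theorem card_filter_le_perm_apply (e : Equiv.Perm (Fin n)) (c : Fin n) :
    #{j | c ≤ e j} = n - c := by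
  rw [← Fin.card_Ici c]
  exact card_equiv e (by simp)

theorem card_filter_le_max_perm_apply_le (e e' : Equiv.Perm (Fin n)) (c : Fin n) :
    #{j | c ≤ max (e j) (e' j)} ≤ 2 * (n - c) := by
  calc #{j | c ≤ max (e j) (e' j)}
      ≤ #{j | c ≤ e j} + #{j | c ≤ e' j} := by
        simp only [le_max_iff, filter_or]
        exact card_union_le _ _
    _ = 2 * (n - c) := by rw [card_filter_le_perm_apply, card_filter_le_perm_apply, two_mul]

theorem sub_mergeSchedule_symm_le (σ τ : Equiv.Perm (Fin n)) (j : Fin n) :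
    n - (mergeSchedule σ τ).symm j ≤ 2 * (n - (max (σ.symm j) (τ.symm j) : Fin n)) :=
  (sub_sort_symm_le_card_filter_le _ j).trans
    (card_filter_le_max_perm_apply_le σ.symm τ.symm _)

end Merging

section Cost

variable {n : ℕ} {w : Fin n → ℝ}

theorem cost_eq_sum_jobs (σ : Equiv.Perm (Fin n)) :
    cost n w σ = ∑ j, ((n - σ.symm j : ℕ) : ℝ) * w j := by
  rw [← Equiv.sum_comp σ]
  simp [cost, Nat.cast_sub (Fin.isLt _).le]

theorem cost_le_mul_cost {c : ℝ} {σ π : Equiv.Perm (Fin n)} (hw : ∀ j, 0 ≤ w j)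
    (h : ∀ j, ((n - π.symm j : ℕ) : ℝ) ≤ c * (n - σ.symm j : ℕ)) :
    cost n w π ≤ c * cost n w σ := by
  simp only [cost_eq_sum_jobs, mul_sum, ← mul_assoc]
  gcongr with j
  · exact hw j
  · exact h j

theorem cost_mergeSchedule_le_left (hw : ∀ j, 0 ≤ w j) (σ τ : Equiv.Perm (Fin n)) :
    cost n w (mergeSchedule σ τ) ≤ 2 * cost n w σ :=
  cost_le_mul_cost hw fun j => by
    exact_mod_cast (sub_mergeSchedule_symm_le σ τ j).trans (by gcongr; exact le_max_left _ _)

theorem cost_mergeSchedule_le_right (hw : ∀ j, 0 ≤ w j) (σ τ : Equiv.Perm (Fin n)) :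
    cost n w (mergeSchedule σ τ) ≤ 2 * cost n w τ :=
  cost_le_mul_cost hw fun j => by
    exact_mod_cast (sub_mergeSchedule_symm_le σ τ j).trans (by gcongr; exact le_max_right _ _)

end Cost

section OptimalValues

variable {n : ℕ} (p q : Fin n → ℝ)

theorem finite_setOf_cost_add_cost (P : Equiv.Perm (Fin n) → Equiv.Perm (Fin n) → Prop) :
    {v : ℝ | ∃ σ τ, P σ τ ∧ v = cost n p σ + cost n q τ}.Finite := by
  refine (Set.finite_range fun s : Equiv.Perm (Fin n) × Equiv.Perm (Fin n) =>
    cost n p s.1 + cost n q s.2).subset ?_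
  rintro _ ⟨σ, τ, -, rfl⟩
  exact ⟨(σ, τ), rfl⟩

theorem fval_le {M : Finset (Fin n)} {σ τ : Equiv.Perm (Fin n)}
    (h : ∀ j ∈ M, σ.symm j = τ.symm j) : fval n p q M ≤ cost n p σ + cost n q τ :=
  csInf_le (finite_setOf_cost_add_cost p q _).bddBelow ⟨σ, τ, h, rfl⟩

theorem exists_fval_eq (M : Finset (Fin n)) : ∃ σ τ : Equiv.Perm (Fin n),
    (∀ j ∈ M, σ.symm j = τ.symm j) ∧ fval n p q M = cost n p σ + cost n q τ := by
  refine Set.Nonempty.csInf_mem ?_ (finite_setOf_cost_add_cost p q _)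
  exact ⟨_, 1, 1, fun _ _ => rfl, rfl⟩

theorem OPT_le {Δ : ℕ} {σ τ : Equiv.Perm (Fin n)} (h : Δ ≤ #{j | σ.symm j = τ.symm j}) :
    OPT n p q Δ ≤ cost n p σ + cost n q τ :=
  csInf_le (finite_setOf_cost_add_cost p q _).bddBelow ⟨σ, τ, h, rfl⟩

theorem exists_OPT_eq {Δ : ℕ} (hΔ : Δ ≤ n) : ∃ σ τ : Equiv.Perm (Fin n),
    Δ ≤ #{j | σ.symm j = τ.symm j} ∧ OPT n p q Δ = cost n p σ + cost n q τ := by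
  refine Set.Nonempty.csInf_mem ?_ (finite_setOf_cost_add_cost p q _)
  exact ⟨_, 1, 1, by simpa using hΔ, rfl⟩

theorem OPT_le_fval {Δ : ℕ} {M : Finset (Fin n)} (hM : Δ ≤ #M) :
    OPT n p q Δ ≤ fval n p q M := by
  obtain ⟨σ, τ, agree, hval⟩ := exists_fval_eq p q M
  rw [hval]
  exact OPT_le p q (hM.trans (card_le_card fun j hj => by simpa using agree j hj))

variable {p q} in
theorem fval_le_two_mul_cost_add_cost (hp : ∀ j, 0 ≤ p j) (hq : ∀ j, 0 ≤ q j)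
    (M : Finset (Fin n)) (σ τ : Equiv.Perm (Fin n)) :
    fval n p q M ≤ 2 * (cost n p σ + cost n q τ) :=
  calc fval n p q M
      ≤ cost n p (mergeSchedule σ τ) + cost n q (mergeSchedule σ τ) := fval_le p q fun _ _ => rfl
    _ ≤ 2 * cost n p σ + 2 * cost n q τ :=
        add_le_add (cost_mergeSchedule_le_left hp σ τ) (cost_mergeSchedule_le_right hq σ τ)
    _ = 2 * (cost n p σ + cost n q τ) := (mul_add _ _ _).symm

end OptimalValues

/-- Theorem 2: the solution of (UB-SMSP), i.e. `f({1,…,n})`,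
is a 2-approximation to (RecSMSP): `OPT(Δ) ≤ f(N) ≤ 2·OPT(Δ)`. -/
theorem stmt_3 (n : ℕ) (hn : 1 ≤ n) (p q : Fin n → ℝ)
    (hp : ∀ j, 0 ≤ p j) (hq : ∀ j, 0 ≤ q j) (Δ : ℕ) (hΔ : Δ ≤ n) :
    OPT n p q Δ ≤ fval n p q Finset.univ ∧
    fval n p q Finset.univ ≤ 2 * OPT n p q Δ := by
  refine ⟨OPT_le_fval p q (by simpa using hΔ), ?_⟩
  obtain ⟨σ, τ, -, hval⟩ := exists_OPT_eq p q hΔ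
  rw [hval]
  exact fval_le_two_mul_cost_add_cost hp hq univ σ τ
end

section
/- Let n ≥ 1 and let p, q : {1,…,n} → ℝ≥0 be non-decreasing, i.e. p₁ ≤ p₂ ≤ … ≤ p_n and q₁ ≤ q₂ ≤ … ≤ q_n. For a bijection π of {1,…,n}, define UB(π) = min_σ ∑_{i=1}^n (n+1−i)·(p(σ(i)) + q(π(σ(i)))), the optimal identical-schedules cost of the instance in which job j has first-stage time p_j and second-stage time q_{π(j)}. Let ρ be the reversal permutation ρ(j) = n+1−j. Then for every bijection π of {1,…,n}, UB(π) ≤ UB(ρ); i.e. among all matchings of the sorted first-stage times to the sorted second-stage times, the fully-crossed matching maximises UB. -/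
open Finset

/-- For sorted processing times `p`, `q` and a matching `π` (job `j` has
first-stage time `p j` and second-stage time `q (π j)`), the value of the
identical-schedules problem (UB-SMSP) of the corresponding instance. -/
noncomputable def UBmatch (n : ℕ) (p q : Fin n → ℝ) (π : Equiv.Perm (Fin n)) : ℝ :=
  sInf {v : ℝ | ∃ σ : Equiv.Perm (Fin n),
    v = ∑ i : Fin n, ((n : ℝ) - ((i : ℕ) : ℝ)) * (p (σ i) + q (π (σ i)))}

/-!
Write `b` for the second-stage times as seen by the first-stage jobs. If `i < j` and `b i ≤ b j`,
exchanging `b i` and `b j` cannot decrease the optimal cost: in any schedule of the new instance,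
either `i` weighs at least as much as `j`, and undoing the exchange does not increase the
second-stage cost, or `j` weighs at least as much as `i`, and exchanging the positions of the two
jobs restores the old matching and, since the first-stage times are sorted, does not increase the
first-stage cost. Bubble sort turns every `b` into its decreasing rearrangement by such exchanges.
-/

section MinCost

variable {ι : Type*} [Fintype ι]

/-- The optimal cost of a single-machine schedule of jobs with processing times `a`, where the
job in position `i` contributes with weight `w i`. A schedule is encoded by the map `σ` from jobs
to positions, so that the exchange argument can compare costs job by job. -/
noncomputable def minCost (w a : ι → ℝ) : ℝ :=
  ⨅ σ : Equiv.Perm ι, ∑ k, w (σ k) * a k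

lemma minCost_le (w a : ι → ℝ) (σ : Equiv.Perm ι) : minCost w a ≤ ∑ k, w (σ k) * a k :=
  ciInf_le (Set.finite_range _).bddBelow σ

variable [DecidableEq ι]

lemma sum_mul_sub_sum_mul_comp_swap {R : Type*} [CommRing R] (c b : ι → R) (i j : ι) :
    ∑ k, c k * b k - ∑ k, c k * b (Equiv.swap i j k) = (c i - c j) * (b i - b j) := by
  obtain rfl | hij := eq_or_ne i j
  · simp
  rw [← sum_sub_distrib, Fintype.sum_eq_add i j hij]
  · rw [Equiv.swap_apply_left, Equiv.swap_apply_right]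
    ring
  · rintro k ⟨hki, hkj⟩
    rw [Equiv.swap_apply_of_ne_of_ne hki hkj, sub_self]

lemma minCost_add_le_minCost_add_comp_swap (w : ι → ℝ) {a b : ι → ℝ} {i j : ι}
    (ha : a i ≤ a j) (hb : b i ≤ b j) :
    minCost w (a + b) ≤ minCost w (a + b ∘ Equiv.swap i j) := by
  refine le_ciInf fun σ ↦ ?_
  obtain hσ | hσ := le_total (w (σ j)) (w (σ i))
  · have second_stage : ∑ k, w (σ k) * b k ≤ ∑ k, w (σ k) * b (Equiv.swap i j k) := by
      rw [← sub_nonpos, sum_mul_sub_sum_mul_comp_swap (fun k ↦ w (σ k))]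
      exact mul_nonpos_of_nonneg_of_nonpos (sub_nonneg.2 hσ) (sub_nonpos.2 hb)
    calc minCost w (a + b)
      _ ≤ ∑ k, w (σ k) * (a + b) k := minCost_le w (a + b) σ
      _ ≤ ∑ k, w (σ k) * (a + b ∘ Equiv.swap i j) k := by
        simpa only [Pi.add_apply, Function.comp_apply, mul_add, sum_add_distrib]
          using add_le_add_right second_stage _
  · have first_stage : ∑ k, w (σ k) * a (Equiv.swap i j k) ≤ ∑ k, w (σ k) * a k := by
      rw [← sub_nonneg, sum_mul_sub_sum_mul_comp_swap (fun k ↦ w (σ k))]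
      exact mul_nonneg_of_nonpos_of_nonpos (sub_nonpos.2 hσ) (sub_nonpos.2 ha)
    calc minCost w (a + b)
      _ ≤ ∑ k, w (σ (Equiv.swap i j k)) * (a + b) k :=
        minCost_le w (a + b) ((Equiv.swap i j).trans σ)
      _ = ∑ k, w (σ k) * (a + b) (Equiv.swap i j k) := by
        rw [← Equiv.sum_comp (Equiv.swap i j)]
        simp only [Equiv.swap_apply_self]
      _ ≤ ∑ k, w (σ k) * (a + b ∘ Equiv.swap i j) k := by
        simpa only [Pi.add_apply, Function.comp_apply, mul_add, sum_add_distrib]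
          using add_le_add_left first_stage _

end MinCost

lemma minCost_add_le_minCost_add_comp_of_antitone {n : ℕ} (w : Fin n → ℝ) {a b : Fin n → ℝ}
    (ha : Monotone a) {τ : Equiv.Perm (Fin n)} (hτ : Antitone (b ∘ τ)) :
    minCost w (a + b) ≤ minCost w (a + b ∘ τ) := by
  let f : Fin n → ℝᵒᵈ := OrderDual.toDual ∘ b
  have f_sorted : f ∘ τ = f ∘ Tuple.sort f :=
    Tuple.comp_sort_eq_comp_iff_monotone.2 hτ.dual_right
  have le_sorted : minCost w (a + b) ≤ minCost w (a + OrderDual.ofDual ∘ f ∘ Tuple.sort f) :=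
    Tuple.bubble_sort_induction
      (P := fun g ↦ minCost w (a + b) ≤ minCost w (a + OrderDual.ofDual ∘ g)) le_rfl
      fun g i j hij hg h ↦ h.trans (minCost_add_le_minCost_add_comp_swap w (ha hij.le) hg.le)
  rwa [← f_sorted] at le_sorted

lemma UBmatch_eq_minCost {n : ℕ} (p q : Fin n → ℝ) (π : Equiv.Perm (Fin n)) :
    UBmatch n p q π = minCost (fun i : Fin n ↦ (n : ℝ) - (i : ℕ)) (p + q ∘ π) := by
  calc UBmatch n p q π
    _ = ⨅ σ : Equiv.Perm (Fin n), ∑ i : Fin n, ((n : ℝ) - (i : ℕ)) * (p + q ∘ π) (σ i) := by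
      simp only [UBmatch, iInf, Set.range, eq_comm, Pi.add_apply, Function.comp_apply]
    _ = minCost (fun i : Fin n ↦ (n : ℝ) - (i : ℕ)) (p + q ∘ π) :=
      Equiv.symm_bijective.surjective.iInf_congr _ fun σ ↦ by
        rw [← Equiv.sum_comp σ]
        simp only [Equiv.symm_apply_apply]

theorem stmt_4_general {n : ℕ} (w : Fin n → ℝ) {p q : Fin n → ℝ}
    (hp : Monotone p) (hq : Monotone q) (π : Equiv.Perm (Fin n)) :
    minCost w (p + q ∘ π) ≤ minCost w (p + q ∘ Fin.revPerm) := by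
  have reversed : (q ∘ π) ∘ Fin.revPerm.trans π.symm = q ∘ Fin.revPerm := by
    ext j
    simp
  rw [← reversed]
  refine minCost_add_le_minCost_add_comp_of_antitone w hp ?_
  rw [reversed]
  exact hq.comp_antitone Fin.rev_anti

/-- Lemma 1: among all matchings of sorted first-stage times
to sorted second-stage times, the fully-crossed matching (the reversal
permutation) maximises the identical-schedules value `UB`. -/
theorem stmt_4 (n : ℕ) (hn : 1 ≤ n) (p q : Fin n → ℝ)
    (hp0 : ∀ j, 0 ≤ p j) (hq0 : ∀ j, 0 ≤ q j)
    (hp : Monotone p) (hq : Monotone q) (π : Equiv.Perm (Fin n)) :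
    UBmatch n p q π ≤ UBmatch n p q (Fin.revPerm) := by
  simpa only [UBmatch_eq_minCost] using stmt_4_general (fun i ↦ (n : ℝ) - (i : ℕ)) hp hq π
end

section
/- Let n ≥ 2 and let p, q : {1,…,n} → ℝ≥0. Let j₁ ≠ j₂ be two jobs with p(j₁) ≤ p(j₂) and q(j₁) ≤ q(j₂), and let q' = q ∘ (j₁ j₂) be obtained from q by exchanging the second-stage times of jobs j₁ and j₂ (so job j₁ gets q(j₂) and job j₂ gets q(j₁)). Then min_σ C_{p+q}(σ) ≤ min_σ C_{p+q'}(σ); i.e. crossing the two jobs does not decrease the optimal identical-schedules cost UB. -/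
open Finset

/-!
Exchanging jobs `j` and `k` in a schedule changes its cost by the product of their position gap
and their processing time gap. Crossing the second-stage times amounts to crossing the jobs in the
second stage of a schedule `σ`. If `σ` runs `j₁` before `j₂`, then `σ` itself costs no more for the
uncrossed instance, since undoing the crossing improves the second stage. Otherwise the exchanged
schedule does: it keeps the second-stage cost and improves the first.
-/

section SumSwap

variable {ι R : Type*} [Fintype ι] [DecidableEq ι] [NonUnitalNonAssocRing R]

theorem sum_mul_comp_swap_sub_sum_mul (f g : ι → R) (a b : ι) :
    ∑ i, f i * g (Equiv.swap a b i) - ∑ i, f i * g i = (f a - f b) * (g b - g a) := by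
  rcases eq_or_ne a b with rfl | hab
  · simp
  · have vanish_off_pair : ∀ i, i ≠ a ∧ i ≠ b →
        f i * (g (Equiv.swap a b i) - g i) = 0 := fun i hi => by
      rw [Equiv.swap_apply_of_ne_of_ne hi.1 hi.2, sub_self, mul_zero]
    simp only [← Finset.sum_sub_distrib, ← mul_sub]
    rw [Fintype.sum_eq_add a b hab vanish_off_pair, Equiv.swap_apply_left,
      Equiv.swap_apply_right, sub_mul, ← neg_sub (g b) (g a), mul_neg, ← sub_eq_add_neg]

end SumSwap

section Cost

variable {n : ℕ}

theorem cost_add (v w : Fin n → ℝ) (σ : Equiv.Perm (Fin n)) :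
    cost n (fun j => v j + w j) σ = cost n v σ + cost n w σ := by
  simp only [cost, mul_add, Finset.sum_add_distrib]

theorem cost_comp_perm (w : Fin n → ℝ) (π σ : Equiv.Perm (Fin n)) :
    cost n (w ∘ π) σ = cost n w (π * σ) :=
  rfl

theorem cost_swap_mul_sub_cost (w : Fin n → ℝ) (σ : Equiv.Perm (Fin n)) (j k : Fin n) :
    cost n w (Equiv.swap j k * σ) - cost n w σ =
      (((σ.symm k : ℕ) : ℝ) - ((σ.symm j : ℕ) : ℝ)) * (w k - w j) := by
  have exchange := sum_mul_comp_swap_sub_sum_mul (fun i : Fin n => (n : ℝ) - ((i : ℕ) : ℝ))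
    (w ∘ σ) (σ.symm j) (σ.symm k)
  simp only [Function.comp_apply, Equiv.apply_symm_apply, sub_sub_sub_cancel_left] at exchange
  rw [Equiv.swap_mul_eq_mul_swap]
  exact exchange

theorem cost_le_cost_swap_mul {w : Fin n → ℝ} {σ : Equiv.Perm (Fin n)} {j k : Fin n}
    (hσ : σ.symm j ≤ σ.symm k) (hw : w j ≤ w k) :
    cost n w σ ≤ cost n w (Equiv.swap j k * σ) := by
  have hpos : ((σ.symm j : ℕ) : ℝ) ≤ ((σ.symm k : ℕ) : ℝ) := by exact_mod_cast hσ
  rw [← sub_nonneg, cost_swap_mul_sub_cost]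
  exact mul_nonneg (sub_nonneg.2 hpos) (sub_nonneg.2 hw)

theorem cost_swap_mul_le_cost {w : Fin n → ℝ} {σ : Equiv.Perm (Fin n)} {j k : Fin n}
    (hσ : σ.symm k ≤ σ.symm j) (hw : w j ≤ w k) :
    cost n w (Equiv.swap j k * σ) ≤ cost n w σ := by
  have hpos : ((σ.symm k : ℕ) : ℝ) ≤ ((σ.symm j : ℕ) : ℝ) := by exact_mod_cast hσ
  rw [← sub_nonpos, cost_swap_mul_sub_cost]
  exact mul_nonpos_of_nonpos_of_nonneg (sub_nonpos.2 hpos) (sub_nonneg.2 hw)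

theorem UBval_eq_iInf (p q : Fin n → ℝ) :
    UBval n p q = ⨅ σ : Equiv.Perm (Fin n), (cost n p σ + cost n q σ) := by
  simp only [UBval, iInf, Set.range, cost_add, eq_comm]

end Cost

theorem stmt_5_general {n : ℕ} {p q : Fin n → ℝ} {j₁ j₂ : Fin n}
    (h1 : p j₁ ≤ p j₂) (h2 : q j₁ ≤ q j₂) :
    UBval n p q ≤ UBval n p (q ∘ Equiv.swap j₁ j₂) := by
  simp only [UBval_eq_iInf, cost_comp_perm]
  refine le_ciInf fun σ => ?_
  have optimum_le (τ : Equiv.Perm (Fin n)) :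
      ⨅ ρ : Equiv.Perm (Fin n), (cost n p ρ + cost n q ρ) ≤ cost n p τ + cost n q τ :=
    ciInf_le (Set.finite_range _).bddBelow τ
  rcases le_total (σ.symm j₁) (σ.symm j₂) with first_j₁ | first_j₂
  · exact (optimum_le σ).trans (add_le_add_right (cost_le_cost_swap_mul first_j₁ h2) _)
  · exact (optimum_le (Equiv.swap j₁ j₂ * σ)).trans
      (add_le_add_left (cost_swap_mul_le_cost first_j₂ h1) _)

/-- crossing two jobs (the job with both smaller processing
times receives the larger second-stage time and vice versa) does not decrease
the optimal identical-schedules cost `UB`. -/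
theorem stmt_5 (n : ℕ) (hn : 2 ≤ n) (p q : Fin n → ℝ)
    (hp : ∀ j, 0 ≤ p j) (hq : ∀ j, 0 ≤ q j)
    (j₁ j₂ : Fin n) (hne : j₁ ≠ j₂) (h1 : p j₁ ≤ p j₂) (h2 : q j₁ ≤ q j₂) :
    UBval n p q ≤ UBval n p (q ∘ (Equiv.swap j₁ j₂)) :=
  stmt_5_general h1 h2
end

section
/- For every n ≥ 1 there exists a bijection τ of {1,…,n} such that for every j ∈ {1,…,n}, τ(j) ≥ max(2j − n − 1, n + 1 − 2j). Such a bijection is obtained by assigning the positions n, n−1, …, 1 in decreasing order to the indices j, alternating between the unassigned index with the largest value and the unassigned index with the smallest value. -/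
open Finset

/-- The greedy alternating assignment of positions to indices: the largest index receives the
largest position, then the smallest and the largest unassigned index receive the remaining positions
in turn, in decreasing order. Reversing the smaller indices in the recursive step makes their
smallest one the next to be served. -/
def greedyPerm : (n : ℕ) → Equiv.Perm (Fin n)
  | 0 => 1
  | n + 1 =>
    finSuccEquivLast.trans <|
      (Fin.revPerm.trans (greedyPerm n)).optionCongr.trans finSuccEquivLast.symm

namespace greedyPerm

theorem apply_last (n : ℕ) : greedyPerm (n + 1) (Fin.last n) = Fin.last n := by
  simp [greedyPerm]

theorem apply_castSucc {n : ℕ} (j : Fin n) :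
    greedyPerm (n + 1) j.castSucc = (greedyPerm n j.rev).castSucc := by
  simp [greedyPerm]

-- Passing from `n` to `n + 1` and reversing the indices replaces `d = 2 * j + 1 - n` by `-d - 1`.
-- This reflection preserves the interval `[-(p + 1), p]`, but not the weaker target `|d| ≤ p + 1`.
theorem two_mul_add_one_sub_mem_Icc {n : ℕ} (j : Fin n) :
    2 * (j : ℤ) + 1 - n ∈ Set.Icc (-((greedyPerm n j : ℤ) + 1)) (greedyPerm n j : ℤ) := by
  induction n with
  | zero => exact j.elim0
  | succ n ih =>
    cases j using Fin.lastCases with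
    | last =>
      rw [apply_last, Set.mem_Icc, Fin.val_last]
      omega
    | cast i =>
      have hrev : (i.rev : ℤ) = n - 1 - i := by
        rw [Fin.val_rev]
        omega
      obtain ⟨hlower, hupper⟩ := ih i.rev
      rw [hrev] at hlower hupper
      rw [apply_castSucc, Set.mem_Icc, Fin.val_castSucc, Fin.val_castSucc]
      omega

end greedyPerm

/-- for every `n ≥ 1` there is a bijection `τ` of `{1,…,n}`
(here modelled on `Fin n`, with `j`, `τ j` 0-indexed, so the 1-indexed index
is `j + 1` and the 1-indexed position is `τ j + 1`) satisfying the dual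
feasibility condition (†): `τ(j) ≥ max(2j − n − 1, n + 1 − 2j)`. -/
theorem stmt_8 (n : ℕ) (hn : 1 ≤ n) :
    ∃ τ : Equiv.Perm (Fin n), ∀ j : Fin n,
      max (2 * ((j : ℤ) + 1) - n - 1) ((n : ℤ) + 1 - 2 * ((j : ℤ) + 1))
        ≤ (τ j : ℤ) + 1 := by
  refine ⟨greedyPerm n, fun j => ?_⟩
  obtain ⟨hlower, hupper⟩ := greedyPerm.two_mul_add_one_sub_mem_Icc j
  apply max_le <;> omega
end

section
/- Let n ≥ 2 be even and consider the fully-crossed 0-1 instance on n jobs: job j has first-stage time p(j) = 0 and second-stage time q(j) = 1 for j ≤ n/2, and p(j) = 1, q(j) = 0 for j > n/2. Then UB = min_σ C_{p+q}(σ) = n(n+1)/2, LB = (min_σ C_p(σ)) + (min_τ C_q(τ)) = n(n/2+1)/2, and hence UB/LB = (2n+2)/(n+2). -/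
open Finset

/-!
Every job has total processing time `1`, so all common schedules cost the same, which gives `UB`.
For a stage optimised on its own, the position weights decrease, so by the rearrangement inequality
shortest processing time first is optimal: the identity schedule for `p`, the reversed one for `q`.
In both stages the unit jobs come last and collect the weights `1, …, n / 2`.
-/

section

variable {n : ℕ} {w p q : Fin n → ℝ} {σ : Equiv.Perm (Fin n)}

theorem sum_fin_sub_val (n : ℕ) : ∑ i : Fin n, ((n : ℝ) - (i : ℕ)) = n * (n + 1) / 2 := by
  induction n with
  | zero => simp
  | succ n ih =>
    simp only [Fin.sum_univ_succ, Fin.val_zero, Fin.val_succ, Nat.cast_add, Nat.cast_one,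
      Nat.cast_zero, add_sub_add_right_eq_sub, ih]
    ring

theorem cost_const (c : ℝ) (σ : Equiv.Perm (Fin n)) :
    cost n (fun _ => c) σ = n * (n + 1) / 2 * c := by
  rw [cost, ← sum_mul, sum_fin_sub_val]

theorem cost_eq_of_zeros_then_ones {k m : ℕ} (hkm : k + m = n)
    (hw : ∀ i, w (σ i) = if (i : ℕ) < k then 0 else 1) :
    cost n w σ = m * (m + 1) / 2 := by
  subst hkm
  simp only [cost, hw, Fin.sum_univ_add, Fin.val_castAdd, Fin.is_lt, if_true, mul_zero,
    sum_const_zero, zero_add, Fin.val_natAdd, Nat.not_lt.2 (Nat.le_add_right _ _), if_false,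
    mul_one, Nat.cast_add, add_sub_add_left_eq_sub, sum_fin_sub_val]

theorem cost_le_cost_of_monotone (hσ : Monotone (w ∘ σ)) (τ : Equiv.Perm (Fin n)) :
    cost n w σ ≤ cost n w τ := by
  have hweight : Antitone fun i : Fin n => (n : ℝ) - (i : ℕ) := fun i j hij =>
    sub_le_sub_left (Nat.cast_le.2 hij) _
  simpa [cost] using (hweight.antivary hσ).sum_mul_le_sum_mul_comp_perm (σ := τ.trans σ.symm)

theorem sInf_cost_eq_of_monotone (hσ : Monotone (w ∘ σ)) :
    sInf {v : ℝ | ∃ τ : Equiv.Perm (Fin n), v = cost n w τ} = cost n w σ := by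
  refine IsLeast.csInf_eq ⟨⟨σ, rfl⟩, ?_⟩
  rintro _ ⟨τ, rfl⟩
  exact cost_le_cost_of_monotone hσ τ

theorem sInf_cost_eq_of_zeros_then_ones {k m : ℕ} (hkm : k + m = n)
    (hw : ∀ i, w (σ i) = if (i : ℕ) < k then 0 else 1) :
    sInf {v : ℝ | ∃ τ : Equiv.Perm (Fin n), v = cost n w τ} = m * (m + 1) / 2 := by
  have hσ : Monotone (w ∘ σ) := by
    intro i j hij
    simp only [Function.comp_apply, hw]
    split_ifs with hi hj hj
    · rfl
    · exact zero_le_one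
    · exact absurd ((Fin.le_def.1 hij).trans_lt hj) hi
    · rfl
  rw [sInf_cost_eq_of_monotone hσ, cost_eq_of_zeros_then_ones hkm hw]

theorem UBval_eq_of_add_eq {c : ℝ} (hpq : ∀ j, p j + q j = c) :
    UBval n p q = n * (n + 1) / 2 * c := by
  simp only [UBval, hpq, cost_const, exists_const, Set.ofPred_eq_eq_singleton, csInf_singleton]

theorem LBval_eq_of_crossed {k m : ℕ} (hkm : k + m = n)
    (hp : ∀ j, p j = if (j : ℕ) < k then 0 else 1)
    (hq : ∀ j, q j = if (j : ℕ) < k then 1 else 0) :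
    LBval n p q = m * (m + 1) / 2 + k * (k + 1) / 2 := by
  have hq_rev : ∀ i, q (Fin.revPerm i) = if (i : ℕ) < m then 0 else 1 := by
    intro i
    rw [hq, Fin.revPerm_apply, Fin.val_rev]
    split_ifs <;> first | omega | rfl
  have hp_id : ∀ i, p ((1 : Equiv.Perm (Fin n)) i) = if (i : ℕ) < k then 0 else 1 := hp
  rw [LBval, sInf_cost_eq_of_zeros_then_ones hkm hp_id,
    sInf_cost_eq_of_zeros_then_ones ((Nat.add_comm m k).trans hkm) hq_rev]

end

/-- for even `n`, the fully-crossed 0-1 instance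
(`p j = 0, q j = 1` for the first `n/2` jobs and `p j = 1, q j = 0` for the
rest) has `UB = n(n+1)/2`, `LB = n(n/2+1)/2`, and hence
`UB/LB = (2n+2)/(n+2)`. -/
theorem stmt_9 (n : ℕ) (hn : 2 ≤ n) (heven : Even n)
    (p q : Fin n → ℝ)
    (hp : ∀ j : Fin n, p j = if (j : ℕ) < n / 2 then 0 else 1)
    (hq : ∀ j : Fin n, q j = if (j : ℕ) < n / 2 then 1 else 0) :
    UBval n p q = n * (n + 1) / 2 ∧
    LBval n p q = n * ((n : ℝ) / 2 + 1) / 2 ∧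
    UBval n p q / LBval n p q = (2 * n + 2) / (n + 2) := by
  have hpq (j : Fin n) : p j + q j = 1 := by
    rw [hp, hq]
    split_ifs <;> norm_num
  have hhalf : ((n / 2 : ℕ) : ℝ) = n / 2 := Nat.cast_div_charZero heven.two_dvd
  have hUB : UBval n p q = n * (n + 1) / 2 := by
    rw [UBval_eq_of_add_eq hpq, mul_one]
  have hLB : LBval n p q = n * ((n : ℝ) / 2 + 1) / 2 := by
    rw [LBval_eq_of_crossed (by grind : n / 2 + n / 2 = n) hp hq, hhalf]
    ring
  refine ⟨hUB, hLB, ?_⟩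
  have hn_ne : (n : ℝ) ≠ 0 := Nat.cast_ne_zero.2 (two_pos.trans_le hn).ne'
  rw [hUB, hLB]
  field_simp [hn_ne]
end

section
/- Let n ≥ 1 be odd and consider the instance on n jobs in which: job j has p(j) = 0, q(j) = 1 for j ≤ (n−1)/2, job (n+1)/2 has p = 0 and q = 1, and job j has p(j) = 1, q(j) = 0 for j ≥ (n+1)/2 + 1. Then UB = min_σ C_{p+q}(σ) = n(n+1)/2, LB = (min_σ C_p(σ)) + (min_τ C_q(τ)) = (n+1)²/4, and hence UB/LB = 2n/(n+1). -/
open Finset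

/-! By the shortest-processing-time rule (the rearrangement inequality), a schedule that sorts the
processing times is optimal. For `0`-`1` processing times with `d` ones, the ones therefore occupy
the last `d` positions, whose weights are `1, …, d`, so the optimum is the triangular number
`d (d + 1) / 2`. In the instance at hand `p + q` has `n` ones, while `p` and `q` have
`(n - 1) / 2` and `(n + 1) / 2` ones respectively. -/

theorem isLeast_cost_of_monotone {n : ℕ} {w : Fin n → ℝ} {π : Equiv.Perm (Fin n)}
    (hπ : Monotone (w ∘ π)) :
    IsLeast {v : ℝ | ∃ σ : Equiv.Perm (Fin n), v = cost n w σ} (cost n w π) := by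
  have weight_antitone : Antitone fun i : Fin n ↦ (n : ℝ) - ((i : ℕ) : ℝ) :=
    fun i j hij ↦ sub_le_sub_left (Nat.cast_le.2 hij) _
  refine ⟨⟨π, rfl⟩, ?_⟩
  rintro _ ⟨σ, rfl⟩
  simpa [cost] using
    (weight_antitone.antivary hπ).sum_mul_le_sum_mul_comp_perm (σ := σ.trans π.symm)

theorem sum_range_cast_add_one {K : Type*} [Field K] [CharZero K] (d : ℕ) :
    ∑ i ∈ range d, ((i : K) + 1) = d * (d + 1) / 2 := by
  induction d with
  | zero => simp
  | succ d ih => rw [sum_range_succ, ih]; push_cast; ring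

theorem card_filter_rev_lt {n d : ℕ} (hd : d ≤ n) :
    #{i : Fin n | (i.rev : ℕ) < d} = d := by
  have card_rev : #{i : Fin n | (i.rev : ℕ) < d} = #{i : Fin n | (i : ℕ) < d} :=
    card_equiv Fin.revPerm (by simp)
  rw [card_rev, Fin.card_filter_val_lt, min_eq_right hd]

theorem sum_weight_filter_rev_lt {n d : ℕ} (hd : d ≤ n) :
    ∑ i : Fin n with (i.rev : ℕ) < d, ((n : ℝ) - ((i : ℕ) : ℝ)) = d * (d + 1) / 2 := by
  have weight_eq (i : Fin n) : (n : ℝ) - ((i : ℕ) : ℝ) = ((i.rev : ℕ) : ℝ) + 1 := by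
    rw [Fin.val_rev, Nat.cast_sub i.isLt]
    push_cast
    ring
  calc ∑ i : Fin n with (i.rev : ℕ) < d, ((n : ℝ) - ((i : ℕ) : ℝ))
      = ∑ i : Fin n, if (i.rev : ℕ) < d then ((i.rev : ℕ) : ℝ) + 1 else 0 := by
        simp only [weight_eq, sum_filter]
    _ = ∑ i : Fin n, if (i : ℕ) < d then ((i : ℕ) : ℝ) + 1 else 0 :=
        Equiv.sum_comp Fin.revPerm fun i : Fin n ↦ if (i : ℕ) < d then ((i : ℕ) : ℝ) + 1 else 0
    _ = ∑ i ∈ range n with i < d, ((i : ℝ) + 1) := by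
        rw [Fin.sum_univ_eq_sum_range fun i ↦ if i < d then (i : ℝ) + 1 else 0, sum_filter]
    _ = ∑ i ∈ range d, ((i : ℝ) + 1) := by
        congr 1
        ext i
        simp only [mem_filter, mem_range]
        omega
    _ = d * (d + 1) / 2 := sum_range_cast_add_one d

theorem isLeast_cost_indicator {n : ℕ} (S : Finset (Fin n)) :
    IsLeast {v : ℝ | ∃ σ : Equiv.Perm (Fin n), v = cost n ((S : Set (Fin n)).indicator 1) σ}
      (#S * (#S + 1) / 2) := by
  have card_le : #S ≤ n := card_finset_fin_le S
  obtain ⟨π, hπ⟩ := Equiv.Perm.exists_map_finset_eq _ S (card_filter_rev_lt card_le)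
  have times_eq (i : Fin n) :
      (S : Set (Fin n)).indicator (1 : Fin n → ℝ) (π i) = if (i.rev : ℕ) < #S then 1 else 0 := by
    have mem_iff : π i ∈ S ↔ (i.rev : ℕ) < #S := by
      conv_lhs => rw [← hπ]
      simp
    simp only [Set.indicator_apply, mem_coe, mem_iff, Pi.one_apply]
  have sorted : Monotone ((S : Set (Fin n)).indicator (1 : Fin n → ℝ) ∘ π) := by
    intro i j hij
    have rev_le : (j.rev : ℕ) ≤ i.rev := Fin.rev_le_rev.2 hij
    simp only [Function.comp_apply, times_eq]
    split_ifs <;> first | omega | norm_num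
  have cost_eq : cost n ((S : Set (Fin n)).indicator 1) π = #S * (#S + 1) / 2 := by
    simp only [cost, times_eq, mul_ite, mul_one, mul_zero, ← sum_filter]
    exact sum_weight_filter_rev_lt card_le
  exact cost_eq ▸ isLeast_cost_of_monotone sorted

theorem UBval_of_add_eq_one {n : ℕ} {p q : Fin n → ℝ} (h : p + q = 1) :
    UBval n p q = n * (n + 1) / 2 := by
  have sum_eq : (fun j ↦ p j + q j) = ((univ : Finset (Fin n)) : Set (Fin n)).indicator 1 := by
    rw [coe_univ, Set.indicator_univ]
    exact h
  rw [UBval, sum_eq, (isLeast_cost_indicator univ).csInf_eq, card_univ, Fintype.card_fin]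

theorem LBval_indicator {n : ℕ} (S T : Finset (Fin n)) :
    LBval n ((S : Set (Fin n)).indicator 1) ((T : Set (Fin n)).indicator 1) =
      #S * (#S + 1) / 2 + #T * (#T + 1) / 2 := by
  rw [LBval, (isLeast_cost_indicator S).csInf_eq, (isLeast_cost_indicator T).csInf_eq]

/-- for odd `n`, the instance in which the first
`(n−1)/2` jobs and job `(n+1)/2` have `p = 0, q = 1` while the jobs
`j ≥ (n+1)/2 + 1` have `p = 1, q = 0` (1-indexed; equivalently the first
`(n+1)/2` jobs have `p = 0, q = 1` and the rest `p = 1, q = 0`) satisfies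
`UB = n(n+1)/2`, `LB = (n+1)²/4`, and hence `UB/LB = 2n/(n+1)`. -/
theorem stmt_10 (n : ℕ) (hn : 1 ≤ n) (hodd : Odd n)
    (p q : Fin n → ℝ)
    (hp : ∀ j : Fin n, p j = if (j : ℕ) + 1 ≤ (n + 1) / 2 then 0 else 1)
    (hq : ∀ j : Fin n, q j = if (j : ℕ) + 1 ≤ (n + 1) / 2 then 1 else 0) :
    UBval n p q = n * (n + 1) / 2 ∧
    LBval n p q = ((n : ℝ) + 1) ^ 2 / 4 ∧
    UBval n p q / LBval n p q = 2 * n / (n + 1) := by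
  obtain ⟨k, rfl⟩ := hodd
  let S : Finset (Fin (2 * k + 1)) := {j | (j : ℕ) < k + 1}
  have card_S : #S = k + 1 := by rw [Fin.card_filter_val_lt]; omega
  have card_compl : #Sᶜ = k := by rw [card_compl, card_S, Fintype.card_fin]; omega
  have mem_S (j : Fin (2 * k + 1)) : j ∈ S ↔ (j : ℕ) + 1 ≤ (2 * k + 1 + 1) / 2 := by
    simp only [S, mem_filter_univ]
    omega
  have p_eq : p = (↑Sᶜ : Set (Fin (2 * k + 1))).indicator 1 := by
    ext j
    simp [hp, Set.indicator_apply, ← mem_S]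
  have q_eq : q = (S : Set (Fin (2 * k + 1))).indicator 1 := by
    ext j
    simp [hq, Set.indicator_apply, ← mem_S]
  have ub_eq := UBval_of_add_eq_one (p := p) (q := q) <| by
    rw [p_eq, q_eq, coe_compl, Set.indicator_compl_add_self]
  have lb_eq : LBval (2 * k + 1) p q = (((2 * k + 1 : ℕ) : ℝ) + 1) ^ 2 / 4 := by
    rw [p_eq, q_eq, LBval_indicator, card_S, card_compl]
    push_cast
    ring
  refine ⟨ub_eq, lb_eq, ?_⟩
  rw [ub_eq, lb_eq]
  field_simp
  norm_num
end

section
/- Let n ≥ 2 be even, let 0 ≤ Δ ≤ n with Δ even (so that n − Δ is even), and consider the fully-crossed 0-1 instance on n jobs: p(j) = 0, q(j) = 1 for j ≤ n/2 and p(j) = 1, q(j) = 0 for j > n/2. Then the optimal value of RecSMSP on this instance is OPT(Δ) = (n² + Δ² + 2n)/4, attained by a solution that applies the (n−Δ)/2 available position swaps between the first-stage and second-stage schedules to the outer-most positions. -/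
open Finset

/-!
In the first stage the jobs outside `A` cost one unit, in the second stage the jobs of `A` do. If
both stages used the same schedule, every position would carry exactly one unit job, at total cost
`n (n + 1) / 2`. For a general pair of schedules, let `S` and `T` be the sets of positions given
to `A` in the two stages: the positions in `T \ S` carry two unit jobs, those in `S \ T` carry none,
and there are equally many of each, say `u`. A job placed identically in both stages sits in
neither set, so `2 u ≤ n - Δ`; moreover `u` is at most the number of jobs in `A` and outside `A`.
Since the weights are `n, n - 1, …, 1`, moving `u` unit jobs from `S \ T` to `T \ S` saves at most
`u (n - u)`, with equality when `S \ T` consists of the first and `T \ S` of the last `u` positions.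
This saving increases with `u` as long as `2 u ≤ n`, so the largest admissible `u` is optimal.
-/

section Slots

variable {α β : Type*}

/-- The positions at which the schedule `σ` (a bijection from positions to jobs) places the jobs
of `A`. -/
def slots (σ : α ≃ β) (A : Finset β) : Finset α :=
  A.map σ.symm.toEmbedding

@[simp]
lemma mem_slots {σ : α ≃ β} {A : Finset β} {i : α} : i ∈ slots σ A ↔ σ i ∈ A :=
  mem_map_equiv

@[simp]
lemma card_slots (σ : α ≃ β) (A : Finset β) : #(slots σ A) = #A :=
  card_map _

lemma exists_slots_eq [Finite α] {s A : Finset α} (h : #s = #A) :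
    ∃ σ : Equiv.Perm α, slots σ A = s := by
  obtain ⟨σ, hσ⟩ := Equiv.Perm.exists_map_finset_eq A s h.symm
  exact ⟨σ.symm, hσ⟩

lemma compl_slots [Fintype α] [DecidableEq α] [Fintype β] [DecidableEq β] (σ : α ≃ β)
    (A : Finset β) : (slots σ A)ᶜ = slots σ Aᶜ := by
  ext i
  simp only [mem_compl, mem_slots]

lemma card_filter_symm_eq_symm [Fintype α] [DecidableEq α] [Fintype β] [DecidableEq β]
    (σ τ : α ≃ β) : #{j | σ.symm j = τ.symm j} = #{i | σ i = τ i} := by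
  refine card_equiv σ.symm fun j => ?_
  simp only [mem_filter_univ, Equiv.apply_symm_apply, Equiv.eq_symm_apply, eq_comm]

variable [DecidableEq α]

lemma card_slots_sdiff_slots_comm (σ τ : α ≃ β) (A : Finset β) :
    #(slots σ A \ slots τ A) = #(slots τ A \ slots σ A) :=
  card_sdiff_comm (by simp only [card_slots])

lemma card_slots_sdiff_slots_le_card (σ τ : α ≃ β) (A : Finset β) :
    #(slots σ A \ slots τ A) ≤ #A :=
  (card_le_card sdiff_subset).trans_eq (card_slots σ A)

lemma card_slots_sdiff_slots_le_card_compl [Fintype β] [DecidableEq β] (σ τ : α ≃ β)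
    (A : Finset β) : #(slots σ A \ slots τ A) ≤ #Aᶜ := by
  rw [← card_slots τ Aᶜ]
  refine card_le_card fun i hi => ?_
  simp only [mem_sdiff, mem_slots, mem_compl] at hi ⊢
  exact hi.2

lemma two_mul_card_slots_sdiff_slots_add_card_eq_le [Fintype α] [DecidableEq β] (σ τ : α ≃ β)
    (A : Finset β) : 2 * #(slots σ A \ slots τ A) + #{i | σ i = τ i} ≤ Fintype.card α := by
  have hsub : slots σ A \ slots τ A ∪ slots τ A \ slots σ A ⊆
      ({i | ¬σ i = τ i} : Finset α) := by
    intro i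
    simp only [mem_union, mem_sdiff, mem_slots, mem_filter_univ]
    grind
  have hcard := card_le_card hsub
  rw [card_union_of_disjoint disjoint_sdiff_sdiff, ← card_slots_sdiff_slots_comm σ τ] at hcard
  have hsplit := card_filter_add_card_filter_not (s := univ) fun i => σ i = τ i
  rw [card_univ] at hsplit
  omega

end Slots

section DistinctIntegers

variable {ι : Type*} {s : Finset ι} {f : ι → ℤ} {c : ℤ}

lemma sum_range_card_le_sum_of_injOn (hf : Set.InjOn f s) (hc : ∀ i ∈ s, c ≤ f i) :
    ∑ j ∈ range #s, (c + j) ≤ ∑ i ∈ s, f i := by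
  rw [← sum_image (f := fun x => x) hf, ← card_image_of_injOn hf]
  exact sum_range_le_sum (forall_mem_image.mpr hc)

lemma sum_le_sum_range_card_of_injOn (hf : Set.InjOn f s) (hc : ∀ i ∈ s, f i ≤ c) :
    ∑ i ∈ s, f i ≤ ∑ j ∈ range #s, (c - j) := by
  rw [← sum_image (f := fun x => x) hf, ← card_image_of_injOn hf]
  exact sum_le_sum_range (forall_mem_image.mpr hc)

lemma sum_range_add_cast (c : ℝ) (k : ℕ) :
    ∑ j ∈ range k, (c + j) = k * (2 * c + k - 1) / 2 := by
  induction k with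
  | zero => simp
  | succ k ih => rw [sum_range_succ, ih]; push_cast; ring

lemma sum_range_sub_cast (c : ℝ) (k : ℕ) :
    ∑ j ∈ range k, (c - j) = k * (2 * c + 1 - k) / 2 := by
  induction k with
  | zero => simp
  | succ k ih => rw [sum_range_succ, ih]; push_cast; ring

end DistinctIntegers

section SlotWeight

variable {n : ℕ}

/-- The total weight of a set of positions, where position `i`, counted from `0`, has
weight `n - i`. -/
noncomputable def slotWeight (s : Finset (Fin n)) : ℝ :=
  ∑ i ∈ s, ((n : ℝ) - ((i : ℕ) : ℝ))

lemma slotWeight_sdiff_sub_slotWeight_sdiff (s t : Finset (Fin n)) :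
    slotWeight (s \ t) - slotWeight (t \ s) = slotWeight s - slotWeight t :=
  sum_sdiff_sub_sum_sdiff

lemma slotWeight_compl (s : Finset (Fin n)) :
    slotWeight sᶜ = slotWeight (univ : Finset (Fin n)) - slotWeight s :=
  eq_sub_of_add_eq (sum_compl_add_sum s _)

lemma le_slotWeight (s : Finset (Fin n)) : (#s : ℝ) * (#s + 1) / 2 ≤ slotWeight s := by
  have hsum : ∑ j ∈ range #s, ((1 : ℤ) + j) ≤ ∑ i ∈ s, ((n : ℤ) - (i : ℕ)) :=
    sum_range_card_le_sum_of_injOn (fun i _ j _ h => by grind) fun i _ => by omega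
  rify at hsum
  calc (#s : ℝ) * (#s + 1) / 2 = ∑ j ∈ range #s, ((1 : ℝ) + j) := by
        rw [sum_range_add_cast]; ring
    _ ≤ slotWeight s := hsum

lemma slotWeight_le (s : Finset (Fin n)) : slotWeight s ≤ #s * (2 * n + 1 - #s) / 2 := by
  have hsum : ∑ i ∈ s, ((n : ℤ) - (i : ℕ)) ≤ ∑ j ∈ range #s, ((n : ℤ) - j) :=
    sum_le_sum_range_card_of_injOn (fun i _ j _ h => by grind) fun i _ => by omega
  rw [← sum_range_sub_cast]
  rify at hsum
  exact hsum

lemma neg_mul_le_slotWeight_sub {s t : Finset (Fin n)} (h : #s = #t) :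
    -((#t : ℝ) * (n - #t)) ≤ slotWeight s - slotWeight t := by
  have hs := le_slotWeight s
  rw [h] at hs
  linarith [slotWeight_le t]

lemma slotWeight_univ : slotWeight (univ : Finset (Fin n)) = n * (n + 1) / 2 := by
  rw [slotWeight, Fin.sum_univ_eq_sum_range fun j => (n : ℝ) - j, sum_range_sub_cast]
  ring

end SlotWeight

section OuterSlots

variable {n k : ℕ}

/-- The first `k` of `n` positions; also used for the first `k` of `n` jobs. -/
def firstSlots (n k : ℕ) : Finset (Fin n) :=
  {i | (i : ℕ) < k}

/-- The last `k` of `n` positions. -/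
def lastSlots (n k : ℕ) : Finset (Fin n) :=
  (firstSlots n k).map Fin.revPerm.toEmbedding

lemma mem_firstSlots {i : Fin n} : i ∈ firstSlots n k ↔ (i : ℕ) < k :=
  mem_filter_univ i

lemma mem_lastSlots {i : Fin n} : i ∈ lastSlots n k ↔ n ≤ (i : ℕ) + k := by
  rw [lastSlots, mem_map_equiv, Fin.revPerm_symm, Fin.revPerm_apply, mem_firstSlots, Fin.val_rev]
  omega

lemma card_firstSlots (hk : k ≤ n) : #(firstSlots n k) = k :=
  (Fin.card_filter_val_lt ..).trans (min_eq_right hk)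

lemma card_lastSlots (hk : k ≤ n) : #(lastSlots n k) = k :=
  (card_map _).trans (card_firstSlots hk)

lemma sum_firstSlots {M : Type*} [AddCommMonoid M] (hk : k ≤ n) (f : ℕ → M) :
    ∑ i ∈ firstSlots n k, f i = ∑ j ∈ range k, f j := by
  rw [firstSlots, sum_filter, Fin.sum_univ_eq_sum_range fun j => if j < k then f j else 0,
    ← sum_filter]
  congr 1
  grind

lemma slotWeight_firstSlots (hk : k ≤ n) :
    slotWeight (firstSlots n k) = k * (2 * n + 1 - k) / 2 := by
  rw [slotWeight, sum_firstSlots hk fun j => (n : ℝ) - j, sum_range_sub_cast]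

lemma slotWeight_lastSlots (hk : k ≤ n) : slotWeight (lastSlots n k) = k * (k + 1) / 2 := by
  have hrev (i : Fin n) : (n : ℝ) - ((i.rev : ℕ) : ℝ) = 1 + ((i : ℕ) : ℝ) := by
    rw [Fin.val_rev, Nat.cast_sub i.isLt]
    push_cast
    ring
  simp only [slotWeight, lastSlots, sum_map, Equiv.coe_toEmbedding, Fin.revPerm_apply, hrev]
  rw [sum_firstSlots hk fun j => (1 : ℝ) + j, sum_range_add_cast]
  ring

/-- The permutation of the positions that, for each `i < k`, exchanges the `i`-th position from the
front with the `i`-th position from the back. -/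
def outerSwap (n k : ℕ) : Equiv.Perm (Fin n) :=
  Function.Involutive.toPerm (fun i => if (i : ℕ) < k ∨ n ≤ (i : ℕ) + k then i.rev else i) <| by
    intro i
    grind

lemma outerSwap_apply (k : ℕ) (i : Fin n) :
    outerSwap n k i = if (i : ℕ) < k ∨ n ≤ (i : ℕ) + k then i.rev else i :=
  rfl

lemma le_two_mul_add_card_outerSwap_eq (hk : k ≤ n) :
    n ≤ 2 * k + #{i | outerSwap n k i = i} := by
  have hcover : (firstSlots n k ∪ lastSlots n k)ᶜ ⊆
      ({i | outerSwap n k i = i} : Finset (Fin n)) := by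
    intro i
    simp only [mem_compl, mem_union, mem_firstSlots, mem_lastSlots, mem_filter_univ]
    exact fun hi => if_neg hi
  have hcard := card_le_card hcover
  have hunion := card_union_le (firstSlots n k) (lastSlots n k)
  rw [card_compl, Fintype.card_fin] at hcard
  rw [card_firstSlots hk, card_lastSlots hk] at hunion
  omega

variable {a : ℕ} {A : Finset (Fin n)} {σ : Equiv.Perm (Fin n)}

lemma slots_sdiff_slots_outerSwap_trans (hσ : slots σ A = firstSlots n a) (hka : k ≤ a)
    (han : a + k ≤ n) :
    slots σ A \ slots ((outerSwap n k).trans σ) A = firstSlots n k := by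
  ext i
  simp only [mem_sdiff, mem_slots, Equiv.trans_apply]
  simp only [← mem_slots (σ := σ), hσ, mem_firstSlots, outerSwap_apply]
  grind

lemma slots_outerSwap_trans_sdiff_slots (hσ : slots σ A = firstSlots n a) (hka : k ≤ a)
    (han : a + k ≤ n) :
    slots ((outerSwap n k).trans σ) A \ slots σ A = lastSlots n k := by
  ext i
  simp only [mem_sdiff, mem_slots, Equiv.trans_apply]
  simp only [← mem_slots (σ := σ), hσ, mem_firstSlots, mem_lastSlots, outerSwap_apply]
  grind

end OuterSlots

section Crossed

variable {n k Δ : ℕ} {A : Finset (Fin n)} {σ τ : Equiv.Perm (Fin n)}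

/-- The 0-1 processing times whose unit jobs are those of `A`. The fully-crossed instance determined
by `A` has first-stage times `unitTimes Aᶜ` and second-stage times `unitTimes A`. -/
def unitTimes (A : Finset (Fin n)) (j : Fin n) : ℝ :=
  if j ∈ A then 1 else 0

lemma cost_unitTimes (A : Finset (Fin n)) (σ : Equiv.Perm (Fin n)) :
    cost n (unitTimes A) σ = slotWeight (slots σ A) := by
  simp only [cost, unitTimes, slotWeight, mul_ite, mul_one, mul_zero, ← mem_slots, ← sum_filter,
    filter_univ_mem]

lemma cost_add_cost_unitTimes (A : Finset (Fin n)) (σ τ : Equiv.Perm (Fin n)) :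
    cost n (unitTimes Aᶜ) σ + cost n (unitTimes A) τ = n * (n + 1) / 2 +
      (slotWeight (slots τ A \ slots σ A) - slotWeight (slots σ A \ slots τ A)) := by
  rw [cost_unitTimes, cost_unitTimes, ← compl_slots, slotWeight_compl, slotWeight_univ,
    slotWeight_sdiff_sub_slotWeight_sdiff, sub_add_eq_add_sub, add_sub_assoc]

/-- The number of position swaps between a job of `A` and a job outside `A` that are available when
at least `Δ ≤ n` jobs have to keep their position. -/
def numSwaps (A : Finset (Fin n)) (Δ : ℕ) : ℕ :=
  min (min #A #Aᶜ) ((n - Δ) / 2)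

lemma numSwaps_le_card (A : Finset (Fin n)) (Δ : ℕ) : numSwaps A Δ ≤ #A :=
  (min_le_left _ _).trans (min_le_left _ _)

lemma card_add_numSwaps_le (A : Finset (Fin n)) (Δ : ℕ) : #A + numSwaps A Δ ≤ n := by
  have hcompl : numSwaps A Δ ≤ #Aᶜ := (min_le_left _ _).trans (min_le_right _ _)
  have hcard := card_add_card_compl A
  rw [Fintype.card_fin] at hcard
  omega

lemma two_mul_numSwaps_le (A : Finset (Fin n)) (Δ : ℕ) : 2 * numSwaps A Δ ≤ n - Δ := by
  have h : numSwaps A Δ ≤ (n - Δ) / 2 := min_le_right _ _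
  omega

lemma card_slots_sdiff_slots_le_numSwaps (h : Δ ≤ #{j | σ.symm j = τ.symm j}) :
    #(slots σ A \ slots τ A) ≤ numSwaps A Δ := by
  have hagree := two_mul_card_slots_sdiff_slots_add_card_eq_le σ τ A
  rw [Fintype.card_fin, ← card_filter_symm_eq_symm] at hagree
  exact le_min (le_min (card_slots_sdiff_slots_le_card σ τ A)
    (card_slots_sdiff_slots_le_card_compl σ τ A)) (by omega)

lemma mul_sub_le_mul_sub {R : Type*} [CommRing R] [PartialOrder R] [IsOrderedRing R] {a b c : R}
    (hab : a ≤ b) (hc : a + b ≤ c) : a * (c - a) ≤ b * (c - b) := by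
  have h : 0 ≤ (b - a) * (c - (a + b)) := mul_nonneg (sub_nonneg.mpr hab) (sub_nonneg.mpr hc)
  rw [← sub_nonneg]
  convert h using 1
  ring

lemma le_cost_add_cost_unitTimes (h : Δ ≤ #{j | σ.symm j = τ.symm j}) :
    (n : ℝ) * (n + 1) / 2 - numSwaps A Δ * (n - numSwaps A Δ) ≤
      cost n (unitTimes Aᶜ) σ + cost n (unitTimes A) τ := by
  set u := #(slots σ A \ slots τ A)
  set m := numSwaps A Δ
  have hum : u ≤ m := card_slots_sdiff_slots_le_numSwaps h
  have hsum : u + m ≤ n := by have : 2 * m ≤ n - Δ := two_mul_numSwaps_le A Δ; omega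
  have hmono : (u : ℝ) * (n - u) ≤ m * (n - m) :=
    mul_sub_le_mul_sub (mod_cast hum) (mod_cast hsum)
  have hmoved := neg_mul_le_slotWeight_sub (card_slots_sdiff_slots_comm τ σ A)
  rw [cost_add_cost_unitTimes]
  linarith

lemma cost_add_cost_outerSwap_trans (hσ : slots σ A = firstSlots n #A) (hkA : k ≤ #A)
    (hAk : #A + k ≤ n) :
    cost n (unitTimes Aᶜ) σ + cost n (unitTimes A) ((outerSwap n k).trans σ) =
      n * (n + 1) / 2 - k * (n - k) := by
  have hkn : k ≤ n := by omega
  rw [cost_add_cost_unitTimes, slots_sdiff_slots_outerSwap_trans hσ hkA hAk,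
    slots_outerSwap_trans_sdiff_slots hσ hkA hAk, slotWeight_firstSlots hkn,
    slotWeight_lastSlots hkn]
  ring

lemma le_card_symm_eq_outerSwap_trans_symm (hk : 2 * k ≤ n - Δ) (hΔ : Δ ≤ n) :
    Δ ≤ #{j | σ.symm j = ((outerSwap n k).trans σ).symm j} := by
  have h := le_two_mul_add_card_outerSwap_eq (n := n) (k := k) (by omega)
  simp only [card_filter_symm_eq_symm, Equiv.trans_apply, EmbeddingLike.apply_eq_iff_eq,
    eq_comm (b := outerSwap _ _ _)]
  omega

theorem stmt_12_general (A : Finset (Fin n)) (hΔ : Δ ≤ n) :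
    OPT n (unitTimes Aᶜ) (unitTimes A) Δ =
      n * (n + 1) / 2 - numSwaps A Δ * (n - numSwaps A Δ) := by
  refine IsLeast.csInf_eq ⟨?_, ?_⟩
  · obtain ⟨σ, hσ⟩ := exists_slots_eq (card_firstSlots (card_finset_fin_le A))
    exact ⟨σ, (outerSwap n (numSwaps A Δ)).trans σ,
      le_card_symm_eq_outerSwap_trans_symm (two_mul_numSwaps_le A Δ) hΔ,
      (cost_add_cost_outerSwap_trans hσ (numSwaps_le_card A Δ) (card_add_numSwaps_le A Δ)).symm⟩
  · rintro v ⟨σ, τ, h, rfl⟩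
    exact le_cost_add_cost_unitTimes h

lemma numSwaps_firstSlots_half (n Δ : ℕ) :
    numSwaps (firstSlots n (n / 2)) Δ = (n - Δ) / 2 := by
  rw [numSwaps, card_compl, Fintype.card_fin, card_firstSlots (Nat.div_le_self n 2)]
  omega

lemma OPT_unitTimes_firstSlots_half (hΔ : Δ ≤ n) (heven : Even (n - Δ)) :
    OPT n (unitTimes (firstSlots n (n / 2))ᶜ) (unitTimes (firstSlots n (n / 2))) Δ =
      ((n : ℝ) ^ 2 + (Δ : ℝ) ^ 2 + 2 * n) / 4 := by
  have hswaps : 2 * (((n - Δ) / 2 : ℕ) : ℝ) = n - Δ := by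
    rw [← Nat.cast_sub hΔ]
    exact mod_cast Nat.two_mul_div_two_of_even heven
  rw [stmt_12_general _ hΔ, numSwaps_firstSlots_half]
  linear_combination (((n - Δ) / 2 : ℕ) / 2 - ((n : ℝ) + Δ) / 4) * hswaps

end Crossed

/-- for even `n` and even `Δ ≤ n`, the fully-crossed 0-1
instance has optimal value `OPT(Δ) = (n² + Δ² + 2n)/4`. -/
theorem stmt_12 (n : ℕ) (hn : 2 ≤ n) (hneven : Even n)
    (Δ : ℕ) (hΔ : Δ ≤ n) (hΔeven : Even Δ)
    (p q : Fin n → ℝ)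
    (hp : ∀ j : Fin n, p j = if (j : ℕ) < n / 2 then 0 else 1)
    (hq : ∀ j : Fin n, q j = if (j : ℕ) < n / 2 then 1 else 0) :
    OPT n p q Δ = ((n : ℝ) ^ 2 + (Δ : ℝ) ^ 2 + 2 * n) / 4 := by
  obtain rfl : p = unitTimes (firstSlots n (n / 2))ᶜ := funext fun j => by
    simp only [hp, unitTimes, mem_compl, mem_firstSlots, ite_not]
  obtain rfl : q = unitTimes (firstSlots n (n / 2)) := funext fun j => by
    simp only [hq, unitTimes, mem_firstSlots]
  exact OPT_unitTimes_firstSlots_half hΔ (hneven.tsub hΔeven)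
end
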